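/- (Bressoud's even-modulus identities.) Let q be a complex number with 0 < |q| < 1, and let k ≥ 2 and 0 ≤ i ≤ k-1 be integers. Then ∑_{s_1 ≥ s_2 ≥ ⋯ ≥ s_{k-1} ≥ 0} q^{s_1^2 + ⋯ + s_{k-1}^2 + s_{k-i} + ⋯ + s_{k-1}} / [(q;q)_{s_1-s_2} ⋯ (q;q)_{s_{k-2}-s_{k-1}} (q^2;q^2)_{s_{k-1}}] = (q^{2k}, q^{k-i}, q^{k+i}; q^{2k})_∞ / (q;q)_∞, where the linear term s_{k-i} + ⋯ + s_{k-1} is empty (equal to 0) when i = 0. -/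

import Mathlib

/-- The finite q-Pochhammer symbol `(x;q)_n = ∏_{j=0}^{n-1} (1 - x q^j)`. -/
noncomputable def qPoch (x q : ℂ) (n : ℕ) : ℂ := ∏ j ∈ Finset.range n, (1 - x * q ^ j)

/-- The infinite q-Pochhammer symbol `(x;q)_∞ = ∏_{j=0}^{∞} (1 - x q^j)`. -/
noncomputable def qPochInf (x q : ℂ) : ℂ := ∏' j : ℕ, (1 - x * q ^ j)

/-! The product side is a theta series by Jacobi's triple product, and this theta series is reached
by iterating Bailey's lemma. Start from Gauss's evaluation of
`∑_r (-1)^r q^{r²} / ((q;q)_{n-r} (q;q)_{n+r})` as `1 / (q²;q²)_n`. Multiplying by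
`q^{n² + c n} / (q;q)_{N-n}` and summing over `n` multiplies the `r`-th weight by `q^{r² + c r}`,
by the q-Chu–Vandermonde sum, so each application adds one summation variable. In the first `i`
steps we take `c = 1`: for `w_r = (-1)^r q^{(b+1) r² + b r}` the product `w_r q^r` is antisymmetric
under `r ↦ -1 - r`, so the denominators `(q;q)_{n-r} (q;q)_{n+1+r}` that arise may be replaced by
symmetric ones and the iteration goes on. The remaining steps take `c = 0`, and finally `N → ∞`.

The sums over `r` involved, including the finite form of the triple product, are evaluated through
the recursion `1 / (q;q)_{m-1} = (1 - q^m) / (q;q)_m` applied to each of the two denominators.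
-/

open Filter Finset Topology

variable {q : ℂ}

/-- The reciprocal `1 / (q;q)_m`, with the usual convention that it vanishes for `m < 0`. -/
noncomputable def recipQPoch (q : ℂ) (m : ℤ) : ℂ :=
  if m < 0 then 0 else (qPoch q q m.toNat)⁻¹

/-- The bilateral form `∑_{r ∈ ℤ} w_r / ((q;q)_{a-r} (q;q)_{b+r})` of Bailey's transform: for
`b = a` (resp. `b = a + 1`) this is the `β`-side of a Bailey pair relative to `1` (resp. `q`). -/
noncomputable def baileySum (q : ℂ) (w : ℤ → ℂ) (a b : ℤ) : ℂ :=
  ∑' r : ℤ, w r * (recipQPoch q (a - r) * recipQPoch q (b + r))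

/-- The general term `(-1)^r q^{a r² + b r}` of a theta series in `q`; these are the weights
of all Bailey pairs below. -/
noncomputable def thetaTerm (q : ℂ) (a b r : ℤ) : ℂ := (-1) ^ r * q ^ (a * r ^ 2 + b * r)

section Pochhammer

lemma one_sub_pow_ne_zero (h1 : ‖q‖ < 1) {n : ℕ} (hn : n ≠ 0) : 1 - q ^ n ≠ 0 := by
  refine sub_ne_zero.mpr fun h => (pow_lt_one₀ (norm_nonneg q) h1 hn).ne ?_
  rw [← norm_pow, ← h, norm_one]

lemma one_sub_zpow_ne_zero (h1 : ‖q‖ < 1) {n : ℤ} (hn : 0 < n) : 1 - q ^ n ≠ 0 := by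
  lift n to ℕ using hn.le
  exact_mod_cast one_sub_pow_ne_zero h1 (by omega)

lemma qPoch_zero (x q : ℂ) : qPoch x q 0 = 1 := prod_range_zero _

lemma qPoch_succ (x q : ℂ) (n : ℕ) : qPoch x q (n + 1) = qPoch x q n * (1 - x * q ^ n) :=
  prod_range_succ _ n

lemma recipQPoch_natCast (q : ℂ) (m : ℕ) : recipQPoch q m = (qPoch q q m)⁻¹ := by
  simp [recipQPoch]

lemma recipQPoch_zero (q : ℂ) : recipQPoch q 0 = 1 := by
  simp [recipQPoch, qPoch_zero]

lemma recipQPoch_of_neg (q : ℂ) {m : ℤ} (hm : m < 0) : recipQPoch q m = 0 := if_pos hm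

lemma nonneg_of_recipQPoch_ne_zero {m : ℤ} (h : recipQPoch q m ≠ 0) : 0 ≤ m :=
  not_lt.mp (mt (recipQPoch_of_neg q) h)

lemma recipQPoch_sub_one (h1 : ‖q‖ < 1) (m : ℤ) :
    recipQPoch q (m - 1) = (1 - q ^ m) * recipQPoch q m := by
  rcases lt_trichotomy m 0 with h | rfl | h
  · rw [recipQPoch_of_neg q h, recipQPoch_of_neg q (by omega), mul_zero]
  · rw [recipQPoch_of_neg q (by omega), zpow_zero, sub_self, zero_mul]
  · obtain ⟨n, rfl⟩ : ∃ n : ℕ, m = (n + 1 : ℕ) := ⟨(m - 1).toNat, by omega⟩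
    have hne : 1 - q ^ (n + 1) ≠ 0 := one_sub_pow_ne_zero h1 n.succ_ne_zero
    rw [show ((n + 1 : ℕ) : ℤ) - 1 = n by omega, recipQPoch_natCast, recipQPoch_natCast,
      zpow_natCast, qPoch_succ, ← pow_succ', mul_inv_rev, mul_inv_cancel_left₀ hne]

lemma summable_norm_mul_pow (x : ℂ) (h1 : ‖q‖ < 1) : Summable fun j : ℕ => ‖-(x * q ^ j)‖ := by
  simp only [norm_neg, norm_mul, norm_pow]
  exact (summable_geometric_of_lt_one (norm_nonneg q) h1).mul_left _

lemma tendsto_qPoch (x : ℂ) (h1 : ‖q‖ < 1) :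
    Tendsto (qPoch x q) atTop (𝓝 (qPochInf x q)) := by
  simpa only [qPochInf, sub_eq_add_neg] using
    (multipliable_one_add_of_summable (summable_norm_mul_pow x h1)).hasProd.tendsto_prod_nat.congr
      fun n => by simp only [qPoch, sub_eq_add_neg]

lemma qPochInf_self_ne_zero (h1 : ‖q‖ < 1) : qPochInf q q ≠ 0 := by
  simpa only [qPochInf, sub_eq_add_neg] using
    tprod_one_add_ne_zero_of_summable (f := fun j : ℕ => -(q * q ^ j))
      (fun j => by
        rw [← sub_eq_add_neg, ← pow_succ']
        exact one_sub_pow_ne_zero h1 j.succ_ne_zero)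
      (summable_norm_mul_pow q h1)

lemma tendsto_inv_qPoch_self (h1 : ‖q‖ < 1) :
    Tendsto (fun n => (qPoch q q n)⁻¹) atTop (𝓝 (qPochInf q q)⁻¹) :=
  (tendsto_qPoch q h1).inv₀ (qPochInf_self_ne_zero h1)

lemma tendsto_recipQPoch (h1 : ‖q‖ < 1) :
    Tendsto (recipQPoch q) atTop (𝓝 (qPochInf q q)⁻¹) := by
  have toNat_atTop : Tendsto Int.toNat atTop atTop :=
    tendsto_atTop.mpr fun b => (eventually_ge_atTop (b : ℤ)).mono fun n hn => by omega
  refine ((tendsto_inv_qPoch_self h1).comp toNat_atTop).congr' ?_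
  filter_upwards [eventually_ge_atTop (0 : ℤ)] with n hn
  exact (if_neg hn.not_gt).symm

lemma exists_norm_recipQPoch_le (h1 : ‖q‖ < 1) : ∃ C : ℝ, ∀ m : ℤ, ‖recipQPoch q m‖ ≤ C := by
  obtain ⟨C, hC⟩ := (tendsto_inv_qPoch_self h1).norm.bddAbove_range
  refine ⟨C, fun m => ?_⟩
  rcases lt_or_ge m 0 with hm | hm
  · rw [recipQPoch_of_neg q hm, norm_zero]
    exact (norm_nonneg _).trans (hC ⟨0, rfl⟩)
  · lift m to ℕ using hm
    rw [recipQPoch_natCast]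
    exact hC ⟨m, rfl⟩

end Pochhammer

section BaileySum

variable {w : ℤ → ℂ}

lemma summable_baileySum (q : ℂ) (w : ℤ → ℂ) (a b : ℤ) :
    Summable fun r : ℤ => w r * (recipQPoch q (a - r) * recipQPoch q (b + r)) := by
  refine summable_of_hasFiniteSupport ((Set.finite_Icc (-b) a).subset fun r hr => ?_)
  have hr := right_ne_zero_of_mul hr
  have ha := nonneg_of_recipQPoch_ne_zero (left_ne_zero_of_mul hr)
  have hb := nonneg_of_recipQPoch_ne_zero (right_ne_zero_of_mul hr)
  exact ⟨by omega, by omega⟩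

lemma baileySum_const_mul (q : ℂ) (w : ℤ → ℂ) (c : ℂ) (a b : ℤ) :
    baileySum q (fun r => c * w r) a b = c * baileySum q w a b := by
  simp only [baileySum, mul_assoc, tsum_mul_left]

lemma baileySum_shift (q : ℂ) (w : ℤ → ℂ) (a b : ℤ) :
    baileySum q (fun r => w (r + 1)) a b = baileySum q w (a + 1) (b - 1) := by
  refine (tsum_congr fun r => ?_).trans ((Equiv.addRight (1 : ℤ)).tsum_eq _)
  simp only [Equiv.coe_addRight]
  rw [show a + 1 - (r + 1) = a - r by ring, show b - 1 + (r + 1) = b + r by ring]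

lemma baileySum_sub_one_left (h0 : q ≠ 0) (h1 : ‖q‖ < 1) (w : ℤ → ℂ) (a b : ℤ) :
    baileySum q w (a - 1) b =
      baileySum q w a b - q ^ a * baileySum q (fun r => w r * q ^ (-r)) a b := by
  rw [← baileySum_const_mul, baileySum, baileySum, baileySum,
    ← (summable_baileySum q _ a b).tsum_sub (summable_baileySum q _ a b)]
  refine tsum_congr fun r => ?_
  rw [show a - 1 - r = a - r - 1 by ring, recipQPoch_sub_one h1, sub_eq_add_neg a r, zpow_add₀ h0]
  ring

lemma baileySum_sub_one_right (h0 : q ≠ 0) (h1 : ‖q‖ < 1) (w : ℤ → ℂ) (a b : ℤ) :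
    baileySum q w a (b - 1) =
      baileySum q w a b - q ^ b * baileySum q (fun r => w r * q ^ r) a b := by
  rw [← baileySum_const_mul, baileySum, baileySum, baileySum,
    ← (summable_baileySum q _ a b).tsum_sub (summable_baileySum q _ a b)]
  refine tsum_congr fun r => ?_
  rw [show b - 1 + r = b + r - 1 by ring, recipQPoch_sub_one h1, zpow_add₀ h0]
  ring

lemma baileySum_of_add_neg (q : ℂ) (w : ℤ → ℂ) {a b : ℤ} (hab : a + b < 0) :
    baileySum q w a b = 0 := by
  refine (tsum_congr fun r => ?_).trans tsum_zero
  rcases lt_or_ge (a - r) 0 with hr | hr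
  · rw [recipQPoch_of_neg q hr, zero_mul, mul_zero]
  · rw [recipQPoch_of_neg q (show b + r < 0 by omega), mul_zero, mul_zero]

lemma baileySum_neg_right (q : ℂ) (w : ℤ → ℂ) (a : ℤ) : baileySum q w a (-a) = w a := by
  rw [baileySum, tsum_eq_single a]
  · rw [sub_self, neg_add_cancel, recipQPoch_zero, mul_one, mul_one]
  · intro r hr
    rcases lt_or_gt_of_ne hr with hr | hr
    · rw [recipQPoch_of_neg q (show -a + r < 0 by omega), mul_zero, mul_zero]
    · rw [recipQPoch_of_neg q (show a - r < 0 by omega), zero_mul, mul_zero]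

-- The substitution `r ↦ -1 - r` exchanges the two denominators.
lemma baileySum_add_one_eq_zero (hw : ∀ r, w (-1 - r) = -w r) (a : ℤ) :
    baileySum q w a (a + 1) = 0 := by
  refine self_eq_neg.mp ?_
  conv_lhs => rw [baileySum, ← (Equiv.subLeft (-1 : ℤ)).tsum_eq]
  rw [baileySum, ← tsum_neg]
  refine tsum_congr fun r => ?_
  rw [Equiv.subLeft_apply, hw, show a - (-1 - r) = a + 1 + r by ring,
    show a + 1 + (-1 - r) = a - r by ring, mul_comm (recipQPoch q (a + 1 + r)), neg_mul]

lemma baileySum_add_one_right (h0 : q ≠ 0) (h1 : ‖q‖ < 1)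
    (hw : ∀ r, w (-1 - r) * q ^ (-1 - r) = -(w r * q ^ r)) (a : ℤ) :
    baileySum q w a (a + 1) = baileySum q w a a := by
  have h := baileySum_sub_one_right h0 h1 w a (a + 1)
  rw [baileySum_add_one_eq_zero (w := fun r => w r * q ^ r) hw, add_sub_cancel_right] at h
  rw [h, mul_zero, sub_zero]

lemma tendsto_baileySum (h1 : ‖q‖ < 1) (hw : Summable w) {ι : Type*} {l : Filter ι} {a b : ι → ℤ}
    (ha : Tendsto a l atTop) (hb : Tendsto b l atTop) :
    Tendsto (fun n => baileySum q w (a n) (b n)) l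
      (𝓝 ((∑' r, w r) * ((qPochInf q q)⁻¹ * (qPochInf q q)⁻¹))) := by
  obtain ⟨C, hC⟩ := exists_norm_recipQPoch_le h1
  have hC0 : 0 ≤ C := (norm_nonneg _).trans (hC 0)
  rw [← tsum_mul_right]
  refine tendsto_tsum_of_dominated_convergence (bound := fun r => ‖w r‖ * (C * C))
    (hw.norm.mul_right _) (fun r => ?_) (.of_forall fun n r => ?_)
  · exact tendsto_const_nhds.mul
      (((tendsto_recipQPoch h1).comp (tendsto_atTop_add_const_right _ (-r) ha)).mul
        ((tendsto_recipQPoch h1).comp (tendsto_atTop_add_const_right _ r hb)))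
  · rw [norm_mul, norm_mul]
    gcongr <;> exact hC _

end BaileySum

section JacobiTripleProduct

variable {w : ℤ → ℂ} {x : ℂ}

lemma baileySum_sub_one_left_of_ratio (h0 : q ≠ 0) (h1 : ‖q‖ < 1)
    (hw : ∀ r, w (r + 1) = -x * q ^ r * w r) (a b : ℤ) :
    baileySum q w (a - 1) b =
      baileySum q w a b + x * q ^ (a - 1) * baileySum q w (a - 1) (b + 1) := by
  have hshift : baileySum q (fun r => w r * q ^ (-r)) a b =
      -x * q ^ (-1 : ℤ) * baileySum q w (a - 1) (b + 1) := by
    have h := baileySum_shift q (fun r => w r * q ^ (-r)) (a - 1) (b + 1)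
    rw [sub_add_cancel, add_sub_cancel_right] at h
    rw [← h, ← baileySum_const_mul]
    congr 1; ext r
    rw [hw, neg_add, zpow_add₀ h0, zpow_neg q r]
    field_simp
  rw [baileySum_sub_one_left h0 h1, hshift, sub_eq_add_neg a, zpow_add₀ h0]
  ring

lemma baileySum_sub_one_right_of_ratio (h0 : q ≠ 0) (h1 : ‖q‖ < 1) (hx : x ≠ 0)
    (hw : ∀ r, w (r + 1) = -x * q ^ r * w r) (a b : ℤ) :
    baileySum q w a (b - 1) =
      baileySum q w a b + q ^ b / x * baileySum q w (a + 1) (b - 1) := by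
  have hshift : baileySum q (fun r => w r * q ^ r) a b =
      -x⁻¹ * baileySum q w (a + 1) (b - 1) := by
    rw [← baileySum_shift, ← baileySum_const_mul]
    congr 1; ext r
    rw [hw]
    field_simp
  rw [baileySum_sub_one_right h0 h1, hshift]
  ring

lemma one_sub_zpow_mul_baileySum_left (h0 : q ≠ 0) (h1 : ‖q‖ < 1) (hx : x ≠ 0)
    (hw : ∀ r, w (r + 1) = -x * q ^ r * w r) (a b : ℤ) :
    (1 - q ^ (a + b)) * baileySum q w a b = (1 - x * q ^ (a - 1)) * baileySum q w (a - 1) b := by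
  have hl := baileySum_sub_one_left_of_ratio h0 h1 hw a b
  have hr := baileySum_sub_one_right_of_ratio h0 h1 hx hw (a - 1) (b + 1)
  rw [add_sub_cancel_right, sub_add_cancel] at hr
  have hq : q ^ (a + b) = x * q ^ (a - 1) * (q ^ (b + 1) / x) := by
    rw [show a + b = (a - 1) + (b + 1) by ring, zpow_add₀ h0 (a - 1)]
    field_simp
  rw [hq]
  linear_combination x * q ^ (a - 1) * hr - hl

lemma one_sub_zpow_mul_baileySum_right (h0 : q ≠ 0) (h1 : ‖q‖ < 1) (hx : x ≠ 0)
    (hw : ∀ r, w (r + 1) = -x * q ^ r * w r) (a b : ℤ) :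
    (1 - q ^ (a + b)) * baileySum q w a b = (1 - q ^ b / x) * baileySum q w a (b - 1) := by
  have hr := baileySum_sub_one_right_of_ratio h0 h1 hx hw a b
  have hl := baileySum_sub_one_left_of_ratio h0 h1 hw (a + 1) (b - 1)
  rw [add_sub_cancel_right, sub_add_cancel] at hl
  have hq : q ^ (a + b) = q ^ b / x * (x * q ^ a) := by
    rw [zpow_add₀ h0]
    field_simp
  rw [hq]
  linear_combination q ^ b / x * hl - hr

-- The ratio condition says `w r = w 0 * (-x)^r * q^(r(r-1)/2)` without halving exponents.
theorem finite_jacobi_triple_product (h0 : q ≠ 0) (h1 : ‖q‖ < 1) (hx : x ≠ 0)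
    (hw : ∀ r, w (r + 1) = -x * q ^ r * w r) (a b : ℕ) :
    baileySum q w a b = w 0 * recipQPoch q (a + b) * (qPoch x q a * qPoch (q / x) q b) := by
  induction a with
  | zero =>
    induction b with
    | zero => simpa [qPoch_zero, recipQPoch_zero] using baileySum_neg_right q w 0
    | succ b ih =>
      have hne : 1 - q ^ ((0 : ℕ) + (b + 1 : ℕ) : ℤ) ≠ 0 := one_sub_zpow_ne_zero h1 (by omega)
      have hstep := one_sub_zpow_mul_baileySum_right h0 h1 hx hw (0 : ℕ) (b + 1 : ℕ)
      have hrec := recipQPoch_sub_one h1 ((0 : ℕ) + (b + 1 : ℕ) : ℤ)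
      rw [show ((b + 1 : ℕ) : ℤ) - 1 = b by omega, ih] at hstep
      rw [show ((0 : ℕ) + (b + 1 : ℕ) : ℤ) - 1 = (0 : ℕ) + b by omega] at hrec
      apply mul_left_cancel₀ hne
      rw [hstep, hrec, qPoch_succ, zpow_natCast, pow_succ]
      ring
  | succ a ih =>
    have hne : 1 - q ^ ((a + 1 : ℕ) + b : ℤ) ≠ 0 := one_sub_zpow_ne_zero h1 (by omega)
    have hstep := one_sub_zpow_mul_baileySum_left h0 h1 hx hw (a + 1 : ℕ) b
    have hrec := recipQPoch_sub_one h1 ((a + 1 : ℕ) + b : ℤ)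
    rw [show ((a + 1 : ℕ) : ℤ) - 1 = a by omega, ih] at hstep
    rw [show ((a + 1 : ℕ) + b : ℤ) - 1 = a + b by omega] at hrec
    apply mul_left_cancel₀ hne
    rw [hstep, hrec, qPoch_succ, zpow_natCast]
    ring

lemma summable_nat_of_ratio (h1 : ‖q‖ < 1) (hw : ∀ r, w (r + 1) = -x * q ^ r * w r) :
    Summable fun n : ℕ => w n := by
  have hlim : Tendsto (fun n : ℕ => ‖-x * q ^ n‖) atTop (𝓝 0) := by
    simpa using ((tendsto_pow_atTop_nhds_zero_of_norm_lt_one h1).const_mul (-x)).norm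
  refine summable_of_ratio_norm_eventually_le (r := 1 / 2) (by norm_num) ?_
  filter_upwards [hlim.eventually_le_const (show (0 : ℝ) < 1 / 2 by norm_num)] with n hn
  rw [Nat.cast_add_one, hw, zpow_natCast, norm_mul]
  gcongr

lemma summable_of_ratio (h0 : q ≠ 0) (h1 : ‖q‖ < 1) (hx : x ≠ 0)
    (hw : ∀ r, w (r + 1) = -x * q ^ r * w r) : Summable w := by
  have hw_neg : ∀ r, w (-(r + 1)) = -(q / x) * q ^ r * w (-r) := fun r => by
    have h := hw (-(r + 1))
    rw [neg_add_rev, neg_add_cancel_comm, zpow_add₀ h0, zpow_neg_one, zpow_neg] at h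
    rw [h, neg_add_rev]
    field_simp
  exact (summable_nat_of_ratio h1 hw).of_nat_of_neg
    (summable_nat_of_ratio (w := fun r => w (-r)) h1 hw_neg)

theorem jacobi_triple_product (h0 : q ≠ 0) (h1 : ‖q‖ < 1) (hx : x ≠ 0)
    (hw : ∀ r, w (r + 1) = -x * q ^ r * w r) :
    ∑' r, w r = w 0 * (qPochInf q q * qPochInf x q * qPochInf (q / x) q) := by
  have hcast : Tendsto (fun n : ℕ => (n : ℤ)) atTop atTop := tendsto_natCast_atTop_atTop
  have hsum := tendsto_baileySum h1 (summable_of_ratio h0 h1 hx hw) hcast hcast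
  have hprod := (tendsto_const_nhds (x := w 0)).mul
      ((tendsto_recipQPoch h1).comp (hcast.atTop_add_atTop hcast)) |>.mul
    ((tendsto_qPoch x h1).mul (tendsto_qPoch (q / x) h1))
  have hlim := tendsto_nhds_unique hsum
    (hprod.congr fun n => (finite_jacobi_triple_product h0 h1 hx hw n n).symm)
  have hne := qPochInf_self_ne_zero h1
  field_simp at hlim
  linear_combination hlim

end JacobiTripleProduct
section Theta

lemma thetaTerm_zero (q : ℂ) (a b : ℤ) : thetaTerm q a b 0 = 1 := by
  simp [thetaTerm]

lemma thetaTerm_mul_zpow (h0 : q ≠ 0) (a b c r : ℤ) :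
    thetaTerm q a b r * q ^ (r ^ 2 + c * r) = thetaTerm q (a + 1) (b + c) r := by
  rw [thetaTerm, thetaTerm, mul_assoc, ← zpow_add₀ h0]
  ring_nf

lemma thetaTerm_add_one (h0 : q ≠ 0) (a b r : ℤ) :
    thetaTerm q a b (r + 1) = -q ^ (a + b) * (q ^ (2 * a)) ^ r * thetaTerm q a b r := by
  have hq : q ^ (a * (r + 1) ^ 2 + b * (r + 1)) =
      q ^ (a + b) * (q ^ (2 * a)) ^ r * q ^ (a * r ^ 2 + b * r) := by
    rw [← zpow_mul, ← zpow_add₀ h0, ← zpow_add₀ h0]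
    ring_nf
  rw [thetaTerm, thetaTerm, hq, zpow_add_one₀ (by norm_num)]
  ring

lemma norm_zpow_lt_one (h1 : ‖q‖ < 1) {n : ℤ} (hn : 0 < n) : ‖q ^ n‖ < 1 := by
  lift n to ℕ using hn.le
  rw [zpow_natCast, norm_pow]
  exact pow_lt_one₀ (norm_nonneg q) h1 (by omega)

lemma summable_thetaTerm (h0 : q ≠ 0) (h1 : ‖q‖ < 1) {a : ℤ} (ha : 0 < a) (b : ℤ) :
    Summable (thetaTerm q a b) :=
  summable_of_ratio (zpow_ne_zero _ h0) (norm_zpow_lt_one h1 (by omega)) (zpow_ne_zero _ h0)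
    (thetaTerm_add_one h0 a b)

theorem tsum_thetaTerm (h0 : q ≠ 0) (h1 : ‖q‖ < 1) {a : ℤ} (ha : 0 < a) (b : ℤ) :
    ∑' r, thetaTerm q a b r = qPochInf (q ^ (2 * a)) (q ^ (2 * a)) *
      qPochInf (q ^ (a + b)) (q ^ (2 * a)) * qPochInf (q ^ (a - b)) (q ^ (2 * a)) := by
  rw [jacobi_triple_product (zpow_ne_zero _ h0) (norm_zpow_lt_one h1 (by omega))
    (zpow_ne_zero _ h0) (thetaTerm_add_one h0 a b), thetaTerm_zero, one_mul, ← zpow_sub₀ h0]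
  ring_nf

lemma tsum_thetaTerm_natCast (h0 : q ≠ 0) (h1 : ‖q‖ < 1) {a b : ℕ} (ha : 0 < a) (hb : b ≤ a) :
    ∑' r, thetaTerm q a b r = qPochInf (q ^ (2 * a)) (q ^ (2 * a)) *
      qPochInf (q ^ (a - b)) (q ^ (2 * a)) * qPochInf (q ^ (a + b)) (q ^ (2 * a)) := by
  rw [tsum_thetaTerm h0 h1 (by omega), mul_right_comm, ← Nat.cast_sub hb]
  norm_cast

end Theta

section BaileyPairs

-- This turns a Bailey pair relative to `q` into one relative to `1` with the same weights.
theorem baileySum_thetaTerm_add_one_right (h0 : q ≠ 0) (h1 : ‖q‖ < 1) (b n : ℤ) :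
    baileySum q (thetaTerm q (b + 1) b) n (n + 1) = baileySum q (thetaTerm q (b + 1) b) n n := by
  refine baileySum_add_one_right h0 h1 (fun r => ?_) n
  have hsign : (-1 : ℂ) ^ (-1 - r) = -(-1) ^ r := by
    rw [sub_eq_add_neg, zpow_add₀ (by norm_num), zpow_neg_one, zpow_neg, ← inv_zpow]
    norm_num
  rw [thetaTerm, thetaTerm, mul_assoc, mul_assoc, ← zpow_add₀ h0, ← zpow_add₀ h0, hsign]
  ring_nf

lemma baileySum_thetaTerm_one_zero_sub_one (h0 : q ≠ 0) (h1 : ‖q‖ < 1) (n : ℤ) :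
    baileySum q (thetaTerm q 1 0) (n - 1) (n - 1) =
      (1 - q ^ (2 * n)) * baileySum q (thetaTerm q 1 0) n n := by
  have hshift : baileySum q (fun r => thetaTerm q 1 0 r * q ^ r) (n - 1) n =
      -baileySum q (fun r => thetaTerm q 1 0 r * q ^ (-r)) n (n - 1) := by
    have h := baileySum_shift q (fun r => thetaTerm q 1 0 r * q ^ (-r)) (n - 1) n
    rw [sub_add_cancel] at h
    rw [← h, ← neg_one_mul, ← baileySum_const_mul]
    congr 1; ext r
    rw [thetaTerm_add_one h0, ← zpow_mul, neg_add, zpow_add₀ h0 (-r), zpow_neg_one, two_mul 1,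
      add_mul, zpow_add₀ h0 (1 * r), one_mul, zpow_neg, add_zero, zpow_one]
    field_simp
  have hl := baileySum_sub_one_left h0 h1 (thetaTerm q 1 0) n n
  have hr := baileySum_sub_one_right h0 h1 (thetaTerm q 1 0) (n - 1) n
  have hr' := baileySum_sub_one_right h0 h1 (fun r => thetaTerm q 1 0 r * q ^ (-r)) n n
  simp only [mul_assoc, ← zpow_add₀ h0, neg_add_cancel, zpow_zero, mul_one] at hr'
  rw [two_mul, zpow_add₀ h0]
  linear_combination hr + hl - q ^ n * hshift + q ^ n * hr'

theorem baileySum_thetaTerm_one_zero (h0 : q ≠ 0) (h1 : ‖q‖ < 1) (n : ℕ) :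
    baileySum q (thetaTerm q 1 0) n n = (qPoch (q ^ 2) (q ^ 2) n)⁻¹ := by
  induction n with
  | zero => simpa [qPoch_zero, thetaTerm_zero] using baileySum_neg_right q (thetaTerm q 1 0) 0
  | succ n ih =>
    have hne : 1 - q ^ (2 * (n + 1)) ≠ 0 := one_sub_pow_ne_zero h1 (by omega)
    have hstep := baileySum_thetaTerm_one_zero_sub_one h0 h1 (n + 1)
    rw [add_sub_cancel_right, ih] at hstep
    rw [qPoch_succ, ← pow_succ', ← pow_mul, mul_inv, hstep, Nat.cast_add_one,
      eq_mul_inv_iff_mul_eq₀ hne]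
    rw [← zpow_natCast]
    push_cast
    ring

end BaileyPairs

section BaileyLemma

/-- The weight for which `baileySum q · N (-r)` is the left side of the q-Chu–Vandermonde sum. -/
noncomputable def vandermondeTerm (q : ℂ) (r s n : ℤ) : ℂ :=
  q ^ ((n - r) * (n + s)) * recipQPoch q (n + s)

lemma baileySum_vandermondeTerm_add_one (h0 : q ≠ 0) (h1 : ‖q‖ < 1) (N r s : ℤ) :
    (1 - q ^ (N + 1 - r)) * baileySum q (vandermondeTerm q r s) (N + 1) (-r) =
      baileySum q (vandermondeTerm q r s) N (-r) +
        q ^ (N + 1 + s) * baileySum q (vandermondeTerm q r (s + 1)) N (-r) := by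
  have hshift : baileySum q (vandermondeTerm q r (s + 1)) N (-r) =
      q ^ (-s) * baileySum q (fun n => vandermondeTerm q r s n * q ^ (-n)) (N + 1) (-r - 1) := by
    rw [← baileySum_const_mul, ← baileySum_shift]
    congr 1; ext n
    rw [vandermondeTerm, vandermondeTerm, mul_right_comm, ← mul_assoc, ← zpow_add₀ h0,
      ← zpow_add₀ h0]
    ring_nf
  have hl := baileySum_sub_one_left h0 h1 (vandermondeTerm q r s) (N + 1) (-r)
  have hr := baileySum_sub_one_right h0 h1 (fun n => vandermondeTerm q r s n * q ^ (-n))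
    (N + 1) (-r)
  simp only [mul_assoc, ← zpow_add₀ h0, neg_add_cancel, zpow_zero, mul_one] at hr
  rw [add_sub_cancel_right] at hl
  rw [hl, hshift, hr, sub_eq_add_neg (N + 1), zpow_add₀ h0 (N + 1),
    zpow_add₀ h0 (N + 1), zpow_neg q s]
  field_simp
  ring

theorem q_vandermonde (h0 : q ≠ 0) (h1 : ‖q‖ < 1) (N r s : ℤ) :
    baileySum q (vandermondeTerm q r s) N (-r) =
      recipQPoch q (N - r) * recipQPoch q (N + s) := by
  rcases lt_or_ge N r with hN | hN
  · rw [baileySum_of_add_neg _ _ (by omega), recipQPoch_of_neg q (by omega), zero_mul]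
  · induction N, hN using Int.leInduction generalizing s with
    | base =>
      rw [baileySum_neg_right, vandermondeTerm, sub_self, zero_mul, zpow_zero, recipQPoch_zero]
    | succ N hN ih =>
      have hne : 1 - q ^ (N + 1 - r) ≠ 0 := one_sub_zpow_ne_zero h1 (by omega)
      have hrec_r := recipQPoch_sub_one h1 (N + 1 - r)
      have hrec_s := recipQPoch_sub_one h1 (N + 1 + s)
      rw [show N + 1 - r - 1 = N - r by ring] at hrec_r
      rw [show N + 1 + s - 1 = N + s by ring] at hrec_s
      apply mul_left_cancel₀ hne
      rw [baileySum_vandermondeTerm_add_one h0 h1, ih, ih, ← mul_assoc (1 - _), ← hrec_r, hrec_s,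
        show N + (s + 1) = N + 1 + s by ring]
      ring

theorem bailey_lemma (h0 : q ≠ 0) (h1 : ‖q‖ < 1) (w : ℤ → ℂ) (c N : ℤ) :
    ∑' n : ℤ, q ^ (n ^ 2 + c * n) * recipQPoch q (N - n) * baileySum q w n (n + c) =
      baileySum q (fun r => w r * q ^ (r ^ 2 + c * r)) N (N + c) := by
  simp only [baileySum, ← tsum_mul_left]
  rw [Summable.tsum_comm]
  · refine tsum_congr fun r => ?_
    rw [mul_assoc, add_assoc N, ← q_vandermonde h0 h1, baileySum, ← tsum_mul_left, ← tsum_mul_left]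
    refine tsum_congr fun n => ?_
    rw [vandermondeTerm, show n ^ 2 + c * n = r ^ 2 + c * r + (n - r) * (n + (c + r)) by ring,
      zpow_add₀ h0, add_assoc n, neg_add_eq_sub]
    ring
  · refine summable_of_hasFiniteSupport
      (((Set.finite_Icc (-N - c) N).prod (Set.finite_Icc (-N - c) N)).subset ?_)
    rintro ⟨r, n⟩ hrn
    have hN := nonneg_of_recipQPoch_ne_zero (right_ne_zero_of_mul (left_ne_zero_of_mul hrn))
    have hrn := right_ne_zero_of_mul (right_ne_zero_of_mul hrn)
    have hl := nonneg_of_recipQPoch_ne_zero (left_ne_zero_of_mul hrn)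
    have hr := nonneg_of_recipQPoch_ne_zero (right_ne_zero_of_mul hrn)
    exact ⟨⟨by omega, by omega⟩, ⟨by omega, by omega⟩⟩

lemma tsum_nat_baileySum (h0 : q ≠ 0) (h1 : ‖q‖ < 1) (w : ℤ → ℂ) (N : ℤ) {c : ℤ} (hc : c ≤ 1) :
    ∑' n : ℕ, q ^ (n ^ 2 + c * n) * recipQPoch q (N - n) * baileySum q w n (n + c) =
      baileySum q (fun r => w r * q ^ (r ^ 2 + c * r)) N (N + c) := by
  rw [← bailey_lemma h0 h1, ← (Nat.cast_injective (R := ℤ)).tsum_eq]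
  refine fun n hn => ⟨n.toNat, Int.toNat_of_nonneg ?_⟩
  by_contra hneg
  exact hn (mul_eq_zero_of_right _ (baileySum_of_add_neg q w (by omega)))

lemma tsum_baileySum_thetaTerm (h0 : q ≠ 0) (h1 : ‖q‖ < 1) (a b N : ℤ) {c : ℤ} (hc : c ≤ 1) :
    ∑' n : ℕ, q ^ (n ^ 2 + c * n) * recipQPoch q (N - n) * baileySum q (thetaTerm q a b) n (n + c) =
      baileySum q (thetaTerm q (a + 1) (b + c)) N (N + c) := by
  simp only [tsum_nat_baileySum h0 h1 _ N hc, thetaTerm_mul_zpow h0]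

theorem baileySum_thetaTerm_chain (h0 : q ≠ 0) (h1 : ‖q‖ < 1) (i j : ℕ) (N : ℤ) :
    ∑' n : ℕ, q ^ (n ^ 2 + if j < i then n else 0) * recipQPoch q (N - n) *
        baileySum q (thetaTerm q (j + 1) (min i j : ℕ)) n n =
      baileySum q (thetaTerm q (j + 1 + 1) (min i (j + 1) : ℕ)) N N := by
  by_cases hji : j < i
  · have h := tsum_baileySum_thetaTerm h0 h1 (j + 1) j N le_rfl
    rw [baileySum_thetaTerm_add_one_right h0 h1] at h
    simp only [baileySum_thetaTerm_add_one_right h0 h1, one_mul] at h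
    simp only [if_pos hji, min_eq_right hji.le, min_eq_right (show j + 1 ≤ i from hji)]
    exact_mod_cast h
  · have h := tsum_baileySum_thetaTerm h0 h1 (j + 1) i N zero_le_one
    simp only [add_zero, zero_mul] at h
    simp only [if_neg hji, min_eq_left (not_lt.mp hji), min_eq_left (show i ≤ j + 1 by omega),
      add_zero]
    exact_mod_cast h

end BaileyLemma

section Multisum

/-- The term of the `j`-fold sum obtained by iterating the Bailey lemma from `1 / (q²;q²)_N`: here
`s 0, …, s (j - 1)` are `s_1, …, s_j`, preceded by `N`, and the last `i` of them also contribute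
linearly to the exponent. -/
noncomputable def chainTerm (q : ℂ) (i : ℕ) : (j : ℕ) → ℕ → (Fin j → ℕ) → ℂ
  | 0, N, _ => (qPoch (q ^ 2) (q ^ 2) N)⁻¹
  | j + 1, N, s => q ^ (s 0 ^ 2 + if j < i then s 0 else 0) * recipQPoch q (N - s 0) *
      chainTerm q i j (s 0) (Fin.tail s)

lemma chainTerm_cons (q : ℂ) (i j N n : ℕ) (s : Fin j → ℕ) :
    chainTerm q i (j + 1) N (Fin.cons n s : Fin (j + 1) → ℕ) =
      q ^ (n ^ 2 + if j < i then n else 0) * recipQPoch q (N - n) * chainTerm q i j n s := by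
  rw [chainTerm, Fin.cons_zero, Fin.tail_cons]

lemma chainTerm_succ (q : ℂ) (i j N : ℕ) (s : Fin (j + 1) → ℕ) :
    chainTerm q i (j + 1) N s = recipQPoch q (N - s 0) * chainTerm q i (j + 1) (s 0) s := by
  rw [chainTerm, chainTerm, sub_self, recipQPoch_zero]
  ring

lemma chainTerm_eq (q : ℂ) (i j : ℕ) (t : ℕ → ℕ) :
    chainTerm q i (j + 1) (t 0) (fun m => t m) =
      q ^ (∑ m ∈ range (j + 1), t m ^ 2 + ∑ m ∈ Ico (j + 1 - i) (j + 1), t m) *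
        ((∏ m ∈ range j, recipQPoch q (t m - t (m + 1))) * (qPoch (q ^ 2) (q ^ 2) (t j))⁻¹) := by
  induction j generalizing t with
  | zero =>
    rcases Nat.eq_zero_or_pos i with rfl | hi
    · simp [chainTerm, recipQPoch_zero]
    · simp [chainTerm, recipQPoch_zero, hi, Nat.sub_eq_zero_of_le hi, pow_add]
  | succ j ih =>
    have hlin : ∑ m ∈ Ico (j + 1 + 1 - i) (j + 1 + 1), t m =
        (if j + 1 < i then t 0 else 0) + ∑ m ∈ Ico (j + 1 - i) (j + 1), t (m + 1) := by
      split_ifs with hji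
      · rw [Nat.sub_eq_zero_of_le (by omega), Nat.sub_eq_zero_of_le (by omega), ← range_eq_Ico,
          ← range_eq_Ico, sum_range_succ', add_comm]
      · rw [zero_add, sum_Ico_add' t, Nat.sub_add_comm (by omega)]
    have htail : Fin.tail (fun m : Fin (j + 1 + 1) => t m) = fun m : Fin (j + 1) => t (m + 1) := rfl
    have hprev := ih fun m => t (m + 1)
    rw [chainTerm, htail, chainTerm_succ, Fin.val_zero, sub_self, recipQPoch_zero]
    simp only [Fin.val_zero]
    rw [hprev, hlin, sum_range_succ' (fun m => t m ^ 2) (j + 1), prod_range_succ']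
    simp only [pow_add]
    ring

lemma tsum_fin_succ {α E : Type*} [AddCommGroup E] [UniformSpace E]
    [IsUniformAddGroup E] [CompleteSpace E] [T0Space E] {j : ℕ}
    {f : (Fin (j + 1) → α) → E} (hf : Summable f) :
    ∑' s, f s = ∑' n, ∑' s : Fin j → α, f (Fin.cons n s : Fin (j + 1) → α) := by
  rw [← (Fin.consEquiv fun _ => α).tsum_eq]
  exact ((Fin.consEquiv fun _ => α).summable_iff.mpr hf).tsum_prod

lemma summable_prod_pow {ρ : ℝ} (h0 : 0 ≤ ρ) (h1 : ρ < 1) (j : ℕ) :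
    Summable fun s : Fin j → ℕ => ∏ m, ρ ^ s m := by
  induction j with
  | zero => exact .of_finite
  | succ j ih =>
    rw [← (Fin.consEquiv fun _ => ℕ).summable_iff]
    refine ((summable_geometric_of_lt_one h0 h1).mul_of_nonneg ih (fun n => pow_nonneg h0 n)
      fun s => prod_nonneg fun m _ => pow_nonneg h0 _).congr fun p => ?_
    simp [Fin.consEquiv, Fin.prod_univ_succ]

lemma exists_norm_chainTerm_le (h1 : ‖q‖ < 1) (i j : ℕ) : ∃ C : ℝ, ∀ N (s : Fin j → ℕ),
    ‖chainTerm q i j N s‖ ≤ C * ∏ m, ‖q‖ ^ s m := by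
  induction j with
  | zero =>
    have hq2 : ‖q ^ 2‖ < 1 := by
      rw [norm_pow]
      exact pow_lt_one₀ (norm_nonneg q) h1 two_ne_zero
    obtain ⟨C, hC⟩ := exists_norm_recipQPoch_le hq2
    refine ⟨C, fun N s => ?_⟩
    simpa [chainTerm, recipQPoch_natCast] using hC N
  | succ j ih =>
    obtain ⟨B, hB⟩ := exists_norm_recipQPoch_le h1
    obtain ⟨C, hC⟩ := ih
    have hB0 : 0 ≤ B := (norm_nonneg _).trans (hB 0)
    refine ⟨B * C, fun N s => ?_⟩
    have hpow : ‖q‖ ^ (s 0 ^ 2 + if j < i then s 0 else 0) ≤ ‖q‖ ^ s 0 :=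
      pow_le_pow_of_le_one (norm_nonneg q) h1.le
        ((Nat.le_self_pow two_ne_zero _).trans (Nat.le_add_right _ _))
    calc ‖chainTerm q i (j + 1) N s‖
        = ‖q‖ ^ (s 0 ^ 2 + if j < i then s 0 else 0) * ‖recipQPoch q (N - s 0)‖ *
            ‖chainTerm q i j (s 0) (Fin.tail s)‖ := by
          rw [chainTerm, norm_mul, norm_mul, norm_pow]
      _ ≤ ‖q‖ ^ s 0 * B * (C * ∏ m, ‖q‖ ^ Fin.tail s m) := by
          gcongr
          exacts [hB _, hC _ _]
      _ = B * C * ∏ m, ‖q‖ ^ s m := by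
          rw [Fin.prod_univ_succ]
          simp only [Fin.tail]
          ring

lemma summable_chainTerm (h1 : ‖q‖ < 1) (i j N : ℕ) : Summable (chainTerm q i j N) := by
  obtain ⟨C, hC⟩ := exists_norm_chainTerm_le h1 i j
  exact .of_norm_bounded ((summable_prod_pow (norm_nonneg q) h1 j).mul_left C) (hC N)

theorem tsum_chainTerm (h0 : q ≠ 0) (h1 : ‖q‖ < 1) (i j N : ℕ) :
    ∑' s, chainTerm q i j N s = baileySum q (thetaTerm q (j + 1) (min i j : ℕ)) N N := by
  induction j generalizing N with
  | zero =>
    rw [tsum_fintype, Fintype.sum_unique, chainTerm, ← baileySum_thetaTerm_one_zero h0 h1,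
      Nat.min_zero, Nat.cast_zero, zero_add]
  | succ j ih =>
    rw [tsum_fin_succ (summable_chainTerm h1 i (j + 1) N), Nat.cast_add_one,
      ← baileySum_thetaTerm_chain h0 h1]
    simp only [chainTerm_cons, tsum_mul_left, ih]

-- As `N → ∞` the factor `1 / (q;q)_{N - s_1}` tends to `1 / (q;q)_∞`, which cancels one of the two
-- such factors in the limit of the `baileySum`.
theorem tsum_chainTerm_head (h0 : q ≠ 0) (h1 : ‖q‖ < 1) {i j : ℕ} (hij : i ≤ j + 1) :
    ∑' s : Fin (j + 1) → ℕ, chainTerm q i (j + 1) (s 0) s =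
      (∑' r, thetaTerm q (j + 2 : ℕ) i r) / qPochInf q q := by
  obtain ⟨C, hC⟩ := exists_norm_chainTerm_le h1 i (j + 1)
  have hcast : Tendsto (fun n : ℕ => (n : ℤ)) atTop atTop := tendsto_natCast_atTop_atTop
  have hlim_sum : Tendsto (fun N : ℕ => ∑' s : Fin (j + 1) → ℕ, chainTerm q i (j + 1) N s) atTop
      (𝓝 (∑' s : Fin (j + 1) → ℕ,
        (qPochInf q q)⁻¹ * chainTerm q i (j + 1) (s 0) s)) := by
    refine tendsto_tsum_of_dominated_convergence
      ((summable_prod_pow (norm_nonneg q) h1 _).mul_left C) (fun s => ?_)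
      (.of_forall fun N s => hC N s)
    have htop := tendsto_atTop_add_const_right _ (-(s 0 : ℤ)) hcast
    exact (((tendsto_recipQPoch h1).comp htop).mul_const _).congr
      fun N => (chainTerm_succ q i j N s).symm
  have hlim_theta := tendsto_baileySum h1 (summable_thetaTerm h0 h1 (a := (j + 2 : ℕ)) (by omega) i)
    hcast hcast
  have heq := tendsto_nhds_unique hlim_sum (hlim_theta.congr fun N => by
    rw [tsum_chainTerm h0 h1, min_eq_left hij]
    push_cast
    ring_nf)
  have hne := qPochInf_self_ne_zero h1
  rw [tsum_mul_left] at heq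
  field_simp at heq ⊢
  linear_combination heq

lemma chainTerm_eq_div (q : ℂ) (i j : ℕ) {s : Fin (j + 1) → ℕ} (hs : Antitone s) {t : ℕ → ℕ}
    (ht : ∀ m : Fin (j + 1), t m = s m) :
    chainTerm q i (j + 1) (s 0) s =
      q ^ (∑ m ∈ range (j + 1), t m ^ 2 + ∑ m ∈ Ico (j + 1 - i) (j + 1), t m) /
        ((∏ m ∈ range j, qPoch q q (t m - t (m + 1))) * qPoch (q ^ 2) (q ^ 2) (t j)) := by
  obtain rfl : (fun m : Fin (j + 1) => t m) = s := funext ht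
  have hprod : ∏ m ∈ range j, recipQPoch q (t m - t (m + 1)) =
      (∏ m ∈ range j, qPoch q q (t m - t (m + 1)))⁻¹ := by
    rw [← prod_inv_distrib]
    refine prod_congr rfl fun m hm => ?_
    have hle : t (m + 1) ≤ t m := Fin.antitone_iff_succ_le.mp hs ⟨m, mem_range.mp hm⟩
    rw [← Nat.cast_sub hle, recipQPoch_natCast]
  rw [div_eq_mul_inv, mul_inv, ← hprod]
  exact chainTerm_eq q i j t

lemma antitone_vecCons_of_chainTerm_ne_zero {i j N : ℕ} {s : Fin j → ℕ}
    (h : chainTerm q i j N s ≠ 0) : Antitone (Matrix.vecCons N s) := by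
  induction j generalizing N with
  | zero => exact Subsingleton.antitone _
  | succ j ih =>
    rw [chainTerm] at h
    have hle := nonneg_of_recipQPoch_ne_zero (right_ne_zero_of_mul (left_ne_zero_of_mul h))
    have htail := ih (right_ne_zero_of_mul h)
    rw [Matrix.vecCons, Fin.cons_self_tail] at htail
    exact antitone_vecCons.mpr ⟨by omega, htail⟩

theorem tsum_antitone_chainTerm (h0 : q ≠ 0) (h1 : ‖q‖ < 1) {i j : ℕ} (hij : i ≤ j + 1) :
    ∑' s : {s : Fin (j + 1) → ℕ // Antitone s}, chainTerm q i (j + 1) (s.1 0) s.1 =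
      (∑' r, thetaTerm q (j + 2 : ℕ) i r) / qPochInf q q := by
  have hsupp : (Function.support fun s : Fin (j + 1) → ℕ => chainTerm q i (j + 1) (s 0) s) ⊆
      {s | Antitone s} := fun s hs =>
    have hcons := antitone_vecCons_of_chainTerm_ne_zero (j := j + 1) (N := s 0) (s := s) hs
    (antitone_vecCons.mp hcons).2
  exact (tsum_subtype_eq_of_support_subset hsupp).trans (tsum_chainTerm_head h0 h1 hij)

end Multisum

/-- Bressoud's even-modulus identities.  The tuple `s` encodes
`s_1 ≥ s_2 ≥ ⋯ ≥ s_{k-1} ≥ 0` via `s_m = t (m-1)`. -/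
theorem bressoud_even_modulus (q : ℂ) (h0 : 0 < ‖q‖) (h1 : ‖q‖ < 1)
    (k i : ℕ) (hk : 2 ≤ k) (hi : i ≤ k - 1) :
    (∑' s : {s : Fin (k - 1) → ℕ // Antitone s},
      (let t : ℕ → ℕ := fun m => if h : m < k - 1 then s.1 ⟨m, h⟩ else 0
       q ^ (∑ m ∈ Finset.range (k - 1), (t m) ^ 2 + ∑ m ∈ Finset.Ico (k - 1 - i) (k - 1), t m) /
         ((∏ m ∈ Finset.range (k - 2), qPoch q q (t m - t (m + 1))) *
           qPoch (q ^ 2) (q ^ 2) (t (k - 2))))) =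
      qPochInf (q ^ (2 * k)) (q ^ (2 * k)) * qPochInf (q ^ (k - i)) (q ^ (2 * k)) *
        qPochInf (q ^ (k + i)) (q ^ (2 * k)) / qPochInf q q := by
  obtain ⟨j, rfl⟩ : ∃ j, k = j + 2 := ⟨k - 2, by omega⟩
  have hq : q ≠ 0 := norm_pos_iff.mp h0
  rw [← tsum_thetaTerm_natCast hq h1 (by omega) (by omega), ← tsum_antitone_chainTerm hq h1 hi]
  exact tsum_congr fun s => (chainTerm_eq_div q i j s.2 fun m => dif_pos m.2).symm
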